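/- Let μ > 0 and let κ : ℝ^{d_θ} → ℝ be differentiable with ⟨θ−θ', ∇κ(θ)−∇κ(θ')⟩ ≥ μ‖θ−θ'‖² for all θ, θ' ∈ ℝ^{d_θ}, and let θ̄⋆ ∈ ℝ^{d_θ} satisfy ∇κ(θ̄⋆) = 0 (so θ̄⋆ is the unique global minimiser of κ). Then for every N ≥ 1 the function θ ↦ e^{−Nκ(θ)} is Lebesgue-integrable with 0 < Z_N := ∫_{ℝ^{d_θ}} e^{−Nκ(θ)} dθ < ∞, and the probability measure π_Θ on ℝ^{d_θ} with density θ ↦ e^{−Nκ(θ)}/Z_N satisfies ∫ ‖θ − θ̄⋆‖² π_Θ(dθ) ≤ 2 d_θ/(μ N). In particular (∫ ‖θ − θ̄⋆‖² π_Θ(dθ))^{1/2} ≤ √(2 d_θ/(μ N)), which is the Wasserstein-2 distance W₂(π_Θ, δ_{θ̄⋆}) between π_Θ and the Dirac measure at θ̄⋆. -/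

import Mathlib

open MeasureTheory Real
open scoped RealInnerProductSpace ENNReal

/-- The Gibbs probability measure on `ℝ^d` with density proportional to `exp (-f θ)`. -/
noncomputable def gibbsMeasure {d : ℕ} (f : EuclideanSpace ℝ (Fin d) → ℝ) :
    Measure (EuclideanSpace ℝ (Fin d)) :=
  (ENNReal.ofReal (∫ θ, Real.exp (-f θ)))⁻¹ •
    volume.withDensity fun θ => ENNReal.ofReal (Real.exp (-f θ))

lemma gc_ray {d : ℕ} (μ : ℝ) (κ : EuclideanSpace ℝ (Fin d) → ℝ)
    (hdiff : Differentiable ℝ κ)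
    (hmono : ∀ θ θ' : EuclideanSpace ℝ (Fin d),
      μ * ‖θ - θ'‖ ^ 2 ≤ ⟪θ - θ', gradient κ θ - gradient κ θ'⟫)
    (θs : EuclideanSpace ℝ (Fin d)) (hθs : gradient κ θs = 0)
    (x : EuclideanSpace ℝ (Fin d)) :
    MonotoneOn (fun s : ℝ => κ (θs + s • x) - μ * ‖x‖ ^ 2 / 2 * s ^ 2) (Set.Ici 0) := by
  have hd : ∀ s : ℝ, HasDerivAt (fun s : ℝ => κ (θs + s • x) - μ * ‖x‖ ^ 2 / 2 * s ^ 2)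
      (⟪gradient κ (θs + s • x), x⟫ - μ * ‖x‖ ^ 2 / 2 * (2 * s)) s := by
    intro s
    have h1 : HasDerivAt (fun s : ℝ => θs + s • x) x s := by
      simpa using ((hasDerivAt_id s).smul_const x).const_add θs
    have h2 := (hdiff (θs + s • x)).hasGradientAt.hasFDerivAt.comp_hasDerivAt s h1
    have h3 : HasDerivAt (fun s : ℝ => μ * ‖x‖ ^ 2 / 2 * s ^ 2)
      (μ * ‖x‖ ^ 2 / 2 * (2 * s)) s := by
      simpa using (hasDerivAt_pow 2 s).const_mul (μ * ‖x‖ ^ 2 / 2)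
    have h4 := h2.sub h3
    have h5 : ⟪gradient κ (θs + s • x), x⟫
        = (InnerProductSpace.toDual ℝ _ (gradient κ (θs + s • x))) x := by
      rw [InnerProductSpace.toDual_apply_apply]
    rw [h5]
    exact h4
  apply monotoneOn_of_deriv_nonneg (convex_Ici 0)
  · exact fun s _ => (hd s).continuousAt.continuousWithinAt
  · exact fun s _ => (hd s).differentiableAt.differentiableWithinAt
  · intro s hs
    rw [interior_Ici] at hs
    have hs : 0 < s := hs
    rw [(hd s).deriv]
    have h := hmono (θs + s • x) θs
    rw [hθs, add_sub_cancel_left, sub_zero, norm_smul, inner_smul_left, mul_pow,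
      Real.norm_eq_abs, sq_abs, real_inner_comm] at h
    simp only [conj_trivial] at h
    have : 0 ≤ s * (⟪gradient κ (θs + s • x), x⟫ - μ * ‖x‖ ^ 2 / 2 * (2 * s)) := by
      nlinarith
    exact nonneg_of_mul_nonneg_right this hs

lemma gc_gauss {d : ℕ} (b : ℝ) (hb : 0 < b) :
    Integrable (fun x : EuclideanSpace ℝ (Fin d) => Real.exp (-b * ‖x‖ ^ 2)) := by
  have h := GaussianFourier.integrable_cexp_neg_mul_sq_norm_add (V := EuclideanSpace ℝ (Fin d))
    (b := (b : ℂ)) (by simpa using hb) 0 0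
  have h2 := h.norm
  refine h2.congr (Filter.Eventually.of_forall fun x => ?_)
  simp only [Complex.norm_exp]
  congr 1
  simp [← Complex.ofReal_pow]

lemma gc_core {d : ℕ} (m : ℝ) (hm : 0 < m) (g : EuclideanSpace ℝ (Fin d) → ℝ)
    (hc : Continuous g)
    (h0 : ∀ x, g 0 + m / 2 * ‖x‖ ^ 2 ≤ g x)
    (h1 : ∀ x, g ((1 / 2 : ℝ) • x) + 3 * m / 8 * ‖x‖ ^ 2 ≤ g x) :
    Integrable (fun x => Real.exp (-g x)) ∧
    (0 < ∫ x, Real.exp (-g x)) ∧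
    Integrable (fun x => ‖x‖ ^ 2 * Real.exp (-g x)) ∧
    (∫ x, ‖x‖ ^ 2 * Real.exp (-g x)) ≤ 2 * d / m * ∫ x, Real.exp (-g x) := by
  have hi : Integrable (fun x => Real.exp (-g x)) := by
    refine ((gc_gauss (d := d) (m / 2) (by positivity)).const_mul (Real.exp (-g 0))).mono'
      (by fun_prop) (Filter.Eventually.of_forall fun x => ?_)
    rw [Real.norm_eq_abs, abs_of_pos (Real.exp_pos _), ← Real.exp_add]
    apply Real.exp_le_exp.2
    linarith [h0 x]
  have hp : 0 < ∫ x, Real.exp (-g x) := integral_exp_pos hi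
  have hs : Integrable (fun x => Real.exp (-g ((1 / 2 : ℝ) • x))) :=
    hi.comp_smul (by norm_num : (1 / 2 : ℝ) ≠ 0)
  have hsi : ∫ x, Real.exp (-g ((1 / 2 : ℝ) • x)) = 2 ^ d * ∫ x, Real.exp (-g x) := by
    have := Measure.integral_comp_smul (volume : Measure (EuclideanSpace ℝ (Fin d)))
      (fun x => Real.exp (-g x)) (1 / 2 : ℝ)
    rw [this]
    simp
  have hle : ∀ x, Real.exp (3 * m / 8 * ‖x‖ ^ 2) * Real.exp (-g x)
      ≤ Real.exp (-g ((1 / 2 : ℝ) • x)) := by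
    intro x
    rw [← Real.exp_add]
    apply Real.exp_le_exp.2
    linarith [h1 x]
  have hq : Integrable (fun x => ‖x‖ ^ 2 * Real.exp (-g x)) := by
    refine (hs.const_mul (8 / (3 * m))).mono'
      (by fun_prop) (Filter.Eventually.of_forall fun x => ?_)
    rw [Real.norm_eq_abs, abs_of_nonneg (by positivity)]
    have h2 : 3 * m / 8 * ‖x‖ ^ 2 * Real.exp (-g x) ≤ Real.exp (-g ((1 / 2 : ℝ) • x)) :=
      le_trans (mul_le_mul_of_nonneg_right
        (by linarith [Real.add_one_le_exp (3 * m / 8 * ‖x‖ ^ 2)]) (Real.exp_pos _).le) (hle x)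
    calc ‖x‖ ^ 2 * Real.exp (-g x)
        = 8 / (3 * m) * (3 * m / 8 * ‖x‖ ^ 2 * Real.exp (-g x)) := by field_simp
      _ ≤ _ := by gcongr
  refine ⟨hi, hp, hq, ?_⟩
  set a : ℝ := d * Real.log 2 with ha
  have hea : Real.exp a = 2 ^ d := by
    rw [ha, Real.exp_nat_mul, Real.exp_log (by norm_num)]
  have hpt : ∀ x, 2 ^ d * ((1 - a) * Real.exp (-g x)
      + 3 * m / 8 * (‖x‖ ^ 2 * Real.exp (-g x))) ≤ Real.exp (-g ((1 / 2 : ℝ) • x)) := by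
    intro x
    refine le_trans ?_ (hle x)
    have h3 := Real.add_one_le_exp (3 * m / 8 * ‖x‖ ^ 2 - a)
    have h4 : Real.exp (3 * m / 8 * ‖x‖ ^ 2)
        = 2 ^ d * Real.exp (3 * m / 8 * ‖x‖ ^ 2 - a) := by
      rw [← hea, ← Real.exp_add]; congr 1; ring
    rw [h4]
    calc _ = 2 ^ d * (3 * m / 8 * ‖x‖ ^ 2 - a + 1) * Real.exp (-g x) := by ring
      _ ≤ _ := by gcongr
  have hI := integral_mono (((hi.const_mul (1 - a)).add (hq.const_mul (3 * m / 8))).const_mul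
    (2 ^ d)) hs hpt
  rw [hsi, integral_const_mul] at hI
  have hI2 := le_of_mul_le_mul_left hI (by positivity)
  simp only [Pi.add_apply] at hI2
  rw [integral_add (hi.const_mul (1 - a)) (hq.const_mul (3 * m / 8)), integral_const_mul,
    integral_const_mul] at hI2
  set Z := ∫ x, Real.exp (-g x)
  set Q := ∫ x, ‖x‖ ^ 2 * Real.exp (-g x)
  have h5 : 3 * m / 8 * Q ≤ a * Z := by linarith
  have h6 : a ≤ d * (3 / 4) := by
    rw [ha]; gcongr; linarith [Real.log_two_lt_d9]
  have h7 : a * Z ≤ d * (3 / 4) * Z := by gcongr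
  rw [div_mul_eq_mul_div, le_div_iff₀ hm]
  linarith

/-- **Concentration of the Gibbs measure `∝ e^{-Nκ}` around the minimiser** (the concentration
half of Proposition 4.2).  If `κ` is differentiable with `μ`-strongly monotone gradient and
`∇κ(θ̄⋆) = 0`, then for every `N ≥ 1` the density `e^{-Nκ}` is integrable with positive mass,
and the normalised measure `π_Θ ∝ e^{-Nκ}` has second moment about `θ̄⋆` at most `2 dθ/(μ N)`;
in particular its square root, which is `W₂(π_Θ, δ_{θ̄⋆})`, is at most `√(2 dθ/(μ N))`. -/
theorem gibbs_concentration {dθ : ℕ} (μ : ℝ) (hμ : 0 < μ)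
    (κ : EuclideanSpace ℝ (Fin dθ) → ℝ)
    (hdiff : Differentiable ℝ κ)
    (hmono : ∀ θ θ' : EuclideanSpace ℝ (Fin dθ),
      μ * ‖θ - θ'‖ ^ 2 ≤ ⟪θ - θ', gradient κ θ - gradient κ θ'⟫)
    (θs : EuclideanSpace ℝ (Fin dθ)) (hθs : gradient κ θs = 0)
    (N : ℕ) (hN : 1 ≤ N) :
    Integrable (fun θ => Real.exp (-(N * κ θ))) ∧
    (0 < ∫ θ, Real.exp (-(N * κ θ))) ∧
    (∫ θ, ‖θ - θs‖ ^ 2 ∂(gibbsMeasure fun θ => N * κ θ)) ≤ 2 * dθ / (μ * N) ∧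
    Real.sqrt (∫ θ, ‖θ - θs‖ ^ 2 ∂(gibbsMeasure fun θ => N * κ θ)) ≤
      Real.sqrt (2 * dθ / (μ * N)) := by
  have hN0 : (0 : ℝ) < N := by exact_mod_cast hN
  have hray := gc_ray μ κ hdiff hmono θs hθs
  have hcκ := hdiff.continuous
  obtain ⟨hi, hp, hq, hQ⟩ := gc_core (μ * N) (by positivity) (fun x => N * κ (θs + x))
    (by fun_prop)
    (by
      intro x
      have h := hray x (a := 0) (b := 1) (by simp) (by simp) (by norm_num)
      simp only [zero_smul, one_smul] at h
      nlinarith)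
    (by
      intro x
      have h := hray x (a := 1 / 2) (b := 1) (by simp) (by simp) (by norm_num)
      simp only [one_smul] at h
      nlinarith)
  have e1 : ∫ x, Real.exp (-(N * κ (θs + x))) = ∫ θ, Real.exp (-(N * κ θ)) :=
    integral_add_left_eq_self (fun θ => Real.exp (-(N * κ θ))) θs
  have e2 : ∫ x, ‖x‖ ^ 2 * Real.exp (-(N * κ (θs + x)))
      = ∫ θ, ‖θ - θs‖ ^ 2 * Real.exp (-(N * κ θ)) := by
    rw [← integral_add_left_eq_self (fun θ => ‖θ - θs‖ ^ 2 * Real.exp (-(N * κ θ))) θs]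
    simp
  have hi' : Integrable (fun θ => Real.exp (-(N * κ θ))) := by
    have := hi.comp_sub_right θs
    simpa using this
  rw [e1] at hp hQ
  rw [e2] at hQ
  have key : (∫ θ, ‖θ - θs‖ ^ 2 ∂(gibbsMeasure fun θ => N * κ θ)) ≤ 2 * dθ / (μ * N) := by
    unfold gibbsMeasure
    rw [integral_smul_measure, integral_withDensity_eq_integral_toReal_smul (by fun_prop)
      (Filter.Eventually.of_forall fun x => ENNReal.ofReal_lt_top)]
    simp only [ENNReal.toReal_ofReal (Real.exp_pos _).le, ENNReal.toReal_inv,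
      ENNReal.toReal_ofReal hp.le, smul_eq_mul]
    rw [inv_mul_le_iff₀ hp, mul_comm (∫ θ, Real.exp (-(N * κ θ)))]
    simpa only [mul_comm] using hQ
  exact ⟨hi', hp, key, Real.sqrt_le_sqrt key⟩
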